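/- arXiv:1502.06795 — 2 statements merged into one kernel-verified Lean document; each statement's English description precedes it below -/
import Mathlib

section
/- Let X be a complex Banach space, ε > 0, and (ψ_j)_{j≥1} a sequence in X with Σ_{j≥1} ‖ψ_j‖_X < ∞. Let J ≥ 1 satisfy Σ_{j>J} ‖ψ_j‖_X < ε/10, assume Σ_{j=1}^J ‖ψ_j‖_X > 0, and set η := ε/(10 Σ_{j=1}^J ‖ψ_j‖_X). Let K be a compact subset of X with K ⊆ Q := {Σ_{j≥1} z_j ψ_j : z ∈ U}. Then there exist finitely many points b_1, …, b_M ∈ X, each of the form b_i = Σ_{j=1}^J z'_j ψ_j with |z'_j| ≤ 1, such that, defining Q_i := {b_i + η Σ_{j=1}^J z_j ψ_j + Σ_{j>J} z_j ψ_j : z ∈ U} for i = 1,…,M, one has: (a) K ⊆ Q_1 ∪ ⋯ ∪ Q_M, and (b) for every i and every x ∈ Q_i, dist(x, K) < 3ε/10; in particular every point at distance at most 7ε/10 from Q_i lies in the open ε-neighborhood K_ε := {x ∈ X : inf_{x'∈K} ‖x − x'‖_X < ε}. -/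
/-- **Localization step** (Cohen-DeVore, Step 1 of the proof of Theorem 2.1).
Let `X` be a complex Banach space, `ε > 0`, and `(ψ_j)_{j ≥ 1}` a sequence in `X` with
`Σ_j ‖ψ_j‖ < ∞`.  Let `J ≥ 1` be such that `Σ_{j > J} ‖ψ_j‖ < ε/10`, assume
`Σ_{j=1}^J ‖ψ_j‖ > 0`, and set `η := ε / (10 Σ_{j=1}^J ‖ψ_j‖)`.  Let `K ⊆ X` be compact
with `K ⊆ Q = {Σ_j z_j ψ_j : z ∈ U}`.  Then there are finitely many points
`b_1, …, b_M`, each of the form `b_i = Σ_{j=1}^J z'_j ψ_j` with `|z'_j| ≤ 1`, such that,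
with `Q_i := {b_i + η Σ_{j=1}^J z_j ψ_j + Σ_{j > J} z_j ψ_j : z ∈ U}`:
(a) `K ⊆ Q_1 ∪ ⋯ ∪ Q_M`; (b) every `x ∈ Q_i` satisfies `dist(x, K) < 3ε/10`; in
particular every point within distance `7ε/10` of `Q_i` lies in the open `ε`-neighborhood
`K_ε` of `K`.  (Sequences are indexed by `ℕ`, index `j ∈ ℕ` corresponding to the
`(j+1)`-st term: the first `J` terms are those with `j < J`.) -/
theorem localization_of_box_cover
    {X : Type*} [NormedAddCommGroup X] [NormedSpace ℂ X] [CompleteSpace X]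
    (ε : ℝ) (hε : 0 < ε)
    (ψ : ℕ → X) (hψ : Summable fun j => ‖ψ j‖)
    (J : ℕ) (hJ : 1 ≤ J) (htail : (∑' k : ℕ, ‖ψ (J + k)‖) < ε / 10)
    (hhead : 0 < ∑ j ∈ Finset.range J, ‖ψ j‖)
    (η : ℝ) (hη : η = ε / (10 * ∑ j ∈ Finset.range J, ‖ψ j‖))
    (K : Set X) (hK : IsCompact K)
    (hKQ : ∀ x ∈ K, ∃ z : ℕ → ℂ, (∀ j, ‖z j‖ ≤ 1) ∧ HasSum (fun j => z j • ψ j) x) :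
    ∃ (M : ℕ) (b : Fin M → X) (Qi : Fin M → Set X),
      (∀ i, ∃ z' : ℕ → ℂ, (∀ j, ‖z' j‖ ≤ 1) ∧ b i = ∑ j ∈ Finset.range J, z' j • ψ j) ∧
      (∀ i, Qi i = {x : X | ∃ z : ℕ → ℂ, (∀ j, ‖z j‖ ≤ 1) ∧
        HasSum (fun j => (if j < J then (η : ℂ) * z j else z j) • ψ j) (x - b i)}) ∧
      (K ⊆ ⋃ i, Qi i) ∧
      (∀ i, ∀ x ∈ Qi i, ∃ x' ∈ K, ‖x - x'‖ < 3 * ε / 10) ∧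
      (∀ i, ∀ y : X, (∃ x ∈ Qi i, ‖y - x‖ ≤ 7 * ε / 10) →
        ∃ x' ∈ K, ‖y - x'‖ < ε) := by
  classical
  have hηpos : 0 < η := by rw [hη]; positivity
  have hηS : η * ∑ j ∈ Finset.range J, ‖ψ j‖ = ε / 10 := by
    rw [hη]; field_simp
  choose z hz1 hz2 using hKQ
  let r : K → (Fin J → ℂ) := fun x j => z x.1 x.2 j
  have htb : TotallyBounded (Set.range r) := by
    refine (isCompact_closedBall (0 : Fin J → ℂ) 1).totallyBounded.subset ?_
    rintro _ ⟨x, rfl⟩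
    rw [mem_closedBall_zero_iff, pi_norm_le_iff_of_nonneg zero_le_one]
    intro j
    exact hz1 _ _ _
  obtain ⟨t, hts, htf, hcov⟩ := htb.exists_subset (Metric.dist_mem_uniformity hηpos)
  obtain ⟨M, c, hc⟩ := htf.fin_param
  have hct : ∀ i, ∃ x : K, r x = c i := fun i => hts (hc.2 ▸ Set.mem_range_self i)
  choose p hp using hct
  let zz : Fin M → ℕ → ℂ := fun i => z (p i).1 (p i).2
  have hb : ∀ i, HasSum (fun j => (if j < J then zz i j else 0) • ψ j)
      (∑ j ∈ Finset.range J, zz i j • ψ j) := by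
    intro i
    have h := hasSum_sum_of_ne_finset_zero (s := Finset.range J)
      (f := fun j => (if j < J then zz i j else 0) • ψ j) (L := .unconditional ℕ) (by
        intro j hj
        simp only [Finset.mem_range] at hj
        simp [hj])
    convert h using 1
    refine Finset.sum_congr rfl fun j hj => ?_
    simp [Finset.mem_range.1 hj]
  have hg : HasSum (fun j => if j < J then η * ‖ψ j‖ else 2 * ‖ψ j‖)
      (ε / 10 + 2 * ∑' k : ℕ, ‖ψ (J + k)‖) := by
    rw [← hasSum_nat_add_iff' J]
    have h1 : ∑ j ∈ Finset.range J, (if j < J then η * ‖ψ j‖ else 2 * ‖ψ j‖) = ε / 10 := by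
      rw [← hηS, Finset.mul_sum]
      refine Finset.sum_congr rfl fun j hj => ?_
      simp [Finset.mem_range.1 hj]
    rw [h1, add_sub_cancel_left]
    have h2 : Summable fun k => ‖ψ (J + k)‖ := by
      simpa [add_comm] using (summable_nat_add_iff J).2 hψ
    simpa [add_comm] using h2.hasSum.mul_left 2
  have key : ∀ i, ∀ x : X, (∃ w : ℕ → ℂ, (∀ j, ‖w j‖ ≤ 1) ∧
        HasSum (fun j => (if j < J then (η : ℂ) * w j else w j) • ψ j)
          (x - ∑ j ∈ Finset.range J, zz i j • ψ j)) → ‖x - (p i).1‖ < 3 * ε / 10 := by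
    rintro i x ⟨w, hw, hs⟩
    have h := (hs.add (hb i)).sub (hz2 (p i).1 (p i).2)
    rw [sub_add_cancel] at h
    have hn := h.norm_le_of_bounded hg (by
      intro j
      by_cases hj : j < J
      · simp only [hj, if_true, zz, add_sub_cancel_right, norm_smul, norm_mul,
          Complex.norm_real, Real.norm_eq_abs, abs_of_pos hηpos]
        have := mul_le_mul_of_nonneg_left (hw j) hηpos.le
        gcongr
        linarith
      · simp only [hj, if_false, zero_smul, add_zero, ← sub_smul, norm_smul]
        gcongr
        have := norm_sub_le (w j) (z (p i).1 (p i).2 j)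
        linarith [hw j, hz1 (p i).1 (p i).2 j])
    linarith
  refine ⟨M, fun i => ∑ j ∈ Finset.range J, zz i j • ψ j, _,
    fun i => ⟨zz i, hz1 _ _, rfl⟩, fun i => rfl, ?_,
    fun i x hx => ⟨p i, (p i).2, key i x hx⟩, ?_⟩
  · intro x hx
    have hm := hcov (Set.mem_range_self (⟨x, hx⟩ : K))
    simp only [Set.mem_iUnion] at hm
    obtain ⟨y, hy, hd⟩ := hm
    obtain ⟨i, rfl⟩ : y ∈ Set.range c := hc.2 ▸ hy
    refine Set.mem_iUnion.2 ⟨i, fun j => if j < J then (z x hx j - zz i j) / η else z x hx j,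
      ?_, ?_⟩
    · intro j
      by_cases hj : j < J
      · simp only [hj, if_true, norm_div, Complex.norm_real, Real.norm_eq_abs, abs_of_pos hηpos]
        rw [div_le_one hηpos]
        have h1 := dist_le_pi_dist (r ⟨x, hx⟩) (c i) ⟨j, hj⟩
        rw [← hp i, dist_eq_norm] at h1
        rw [← hp i] at hd
        exact h1.trans (le_of_lt hd)
      · simpa [hj] using hz1 x hx j
    · convert (hz2 x hx).sub (hb i) using 1
      funext j
      have hne : (η : ℂ) ≠ 0 := by exact_mod_cast hηpos.ne'
      by_cases hj : j < J
      · simp only [hj, if_true, mul_div_cancel₀ _ hne, ← sub_smul]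
      · simp [hj]
  · rintro i y ⟨x, hx, hxy⟩
    refine ⟨p i, (p i).2, ?_⟩
    have h1 := key i x hx
    have h2 := norm_sub_le_norm_sub_add_norm_sub y x (p i).1
    linarith
end

section
/- Let X and Y be complex Banach spaces, O ⊆ X open, and u : O → Y holomorphic on O with sup_{x∈O} ‖u(x)‖_Y ≤ B. Let b ∈ X and let (ψ_j)_{j≥1} be a sequence in X with Σ_{j≥1} ‖ψ_j‖_X < ∞. Let δ > 0 and suppose every point at distance at most δ from the set Q* := {b + Σ_{j≥1} z_j ψ_j : z ∈ U} lies in O. Let ρ = (ρ_j)_{j≥1} satisfy ρ_j ≥ 1 for all j and Σ_{j≥1} (ρ_j − 1) ‖ψ_j‖_X ≤ δ. Then the map v(z) := u(b + Σ_{j≥1} z_j ψ_j) is well defined on the polydisc U_ρ := {z ∈ ℂ^ℕ : |z_j| ≤ ρ_j for all j}, satisfies ‖v(z)‖_Y ≤ B for all z ∈ U_ρ, and for each fixed z ∈ U_ρ and each index k, the one-variable map ζ ↦ u(b + ζ ψ_k + Σ_{j≠k} z_j ψ_j) is holomorphic on the open disc {|ζ| < ρ_k}. -/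
/-- **Parametrization and holomorphic extension** (Cohen-DeVore, Step 2 of the proof of
Theorem 2.1).  Let `X, Y` be complex Banach spaces, `O ⊆ X` open, `u` holomorphic on `O`
with `‖u‖ ≤ B` on `O`.  Let `b ∈ X` and `(ψ_j)_{j ≥ 1}` a sequence in `X` with
`Σ_j ‖ψ_j‖ < ∞`.  Let `δ > 0` and suppose every point within distance `δ` of
`Q* = {b + Σ_j z_j ψ_j : z ∈ U}` lies in `O`.  Let `ρ = (ρ_j)` satisfy `ρ_j ≥ 1` and
`Σ_j (ρ_j - 1) ‖ψ_j‖ ≤ δ`.  Then `v(z) := u(b + Σ_j z_j ψ_j)` is well defined on the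
polydisc `U_ρ = {z : |z_j| ≤ ρ_j}` with `‖v(z)‖ ≤ B` there, and for each `z ∈ U_ρ` and
each index `k`, the one-variable map `ζ ↦ u(b + ζ ψ_k + Σ_{j ≠ k} z_j ψ_j)` is holomorphic
on the open disc `{|ζ| < ρ_k}`. -/
theorem holomorphic_on_polydisc_extension
    {X Y : Type*} [NormedAddCommGroup X] [NormedSpace ℂ X] [CompleteSpace X]
    [NormedAddCommGroup Y] [NormedSpace ℂ Y] [CompleteSpace Y]
    (O : Set X) (hO : IsOpen O) (u : X → Y) (hu : DifferentiableOn ℂ u O)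
    (B : ℝ) (hB : ∀ x ∈ O, ‖u x‖ ≤ B)
    (b : X) (ψ : ℕ → X) (hψ : Summable fun j => ‖ψ j‖)
    (δ : ℝ) (hδ : 0 < δ)
    (hQ : ∀ y : X, (∃ x : X, (∃ z : ℕ → ℂ, (∀ j, ‖z j‖ ≤ 1) ∧
      HasSum (fun j => z j • ψ j) (x - b)) ∧ ‖y - x‖ ≤ δ) → y ∈ O)
    (ρ : ℕ → ℝ) (hρ1 : ∀ j, 1 ≤ ρ j)
    (hρs : Summable fun j => (ρ j - 1) * ‖ψ j‖)
    (hρδ : (∑' j, (ρ j - 1) * ‖ψ j‖) ≤ δ) :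
    (∀ z : ℕ → ℂ, (∀ j, ‖z j‖ ≤ ρ j) →
      Summable (fun j => z j • ψ j) ∧
      (b + ∑' j, z j • ψ j) ∈ O ∧
      ‖u (b + ∑' j, z j • ψ j)‖ ≤ B) ∧
    (∀ z : ℕ → ℂ, (∀ j, ‖z j‖ ≤ ρ j) → ∀ k : ℕ,
      DifferentiableOn ℂ
        (fun ζ : ℂ => u (b + ∑' j, Function.update z k ζ j • ψ j))
        {ζ : ℂ | ‖ζ‖ < ρ k}) := by
  have hsumρ : Summable fun j => ρ j * ‖ψ j‖ := by
    have h := hρs.add hψ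
    refine h.congr (fun j => ?_)
    ring
  have key : ∀ z : ℕ → ℂ, (∀ j, ‖z j‖ ≤ ρ j) →
      Summable (fun j => z j • ψ j) ∧ (b + ∑' j, z j • ψ j) ∈ O := by
    intro z hz
    have hs : Summable (fun j => z j • ψ j) := by
      refine Summable.of_norm_bounded hsumρ (fun j => ?_)
      rw [norm_smul]
      exact mul_le_mul_of_nonneg_right (hz j) (norm_nonneg _)
    refine ⟨hs, ?_⟩
    have hpos : ∀ j, 0 < ρ j := fun j => lt_of_lt_of_le one_pos (hρ1 j)
    have hw : ∀ j, ‖z j / (ρ j : ℂ)‖ ≤ 1 := by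
      intro j
      rw [norm_div, Complex.norm_real, Real.norm_of_nonneg (hpos j).le]
      exact (div_le_one (hpos j)).2 (hz j)
    have hws : Summable (fun j => (z j / (ρ j : ℂ)) • ψ j) := by
      refine Summable.of_norm_bounded hψ (fun j => ?_)
      rw [norm_smul]
      exact mul_le_of_le_one_left (norm_nonneg _) (hw j)
    refine hQ _ ⟨b + ∑' j, (z j / (ρ j : ℂ)) • ψ j,
      ⟨fun j => z j / (ρ j : ℂ), hw, ?_⟩, ?_⟩
    · rw [add_sub_cancel_left]
      exact hws.hasSum
    · rw [add_sub_add_left_eq_sub, ← hs.tsum_sub hws]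
      refine le_trans (tsum_of_norm_bounded hρs.hasSum (fun j => ?_)) hρδ
      rw [← sub_smul, norm_smul]
      refine mul_le_mul_of_nonneg_right ?_ (norm_nonneg _)
      have hne : (ρ j : ℂ) ≠ 0 := by exact_mod_cast (hpos j).ne'
      have e : z j - z j / (ρ j : ℂ) = (z j / (ρ j : ℂ)) * ((ρ j - 1 : ℝ) : ℂ) := by
        push_cast
        field_simp
      rw [e, norm_mul, Complex.norm_real, Real.norm_of_nonneg (sub_nonneg.2 (hρ1 j))]
      exact mul_le_of_le_one_left (sub_nonneg.2 (hρ1 j)) (hw j)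
  refine ⟨fun z hz => ⟨(key z hz).1, (key z hz).2, hB _ (key z hz).2⟩, ?_⟩
  intro z hz k
  have hform : ∀ ζ : ℂ, ∑' j, Function.update z k ζ j • ψ j
      = ζ • ψ k - z k • ψ k + ∑' j, z j • ψ j := by
    intro ζ
    have h := (key z hz).1.hasSum.update k (ζ • ψ k)
    rw [← h.tsum_eq]
    refine tsum_congr (fun j => ?_)
    by_cases hj : j = k
    · subst hj
      simp
    · simp [Function.update_of_ne hj]
  refine hu.comp (f := fun ζ : ℂ => b + ∑' j, Function.update z k ζ j • ψ j) ?_ ?_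
  · simp only [hform]
    fun_prop
  · intro ζ hζ
    refine (key (Function.update z k ζ) (fun j => ?_)).2
    by_cases hj : j = k
    · subst hj
      simpa using (le_of_lt hζ)
    · simpa [Function.update_of_ne hj] using hz j
end
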